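/- Angle lower bound: let 0 < ψ < π/2 and let x, y, z be unit vectors in ℝ³ with d(x,y) = d(x,z) = ψ and d(y,z) ≥ ψ. Then ∠(y,x,z) ≥ arccos( cos(ψ) / (1 + cos(ψ)) ). -/

import Mathlib

open scoped RealInnerProductSpace

noncomputable section

/-- Euclidean 3-space. -/
abbrev E3 := EuclideanSpace ℝ (Fin 3)

/-- Geodesic distance between unit vectors on the sphere. -/
def gdist (x y : E3) : ℝ := Real.arccos ⟪x, y⟫

/-- The minimum geodesic distance among distinct points of a finite set. -/
def psi (X : Finset E3) : ℝ :=
  sInf {r : ℝ | ∃ x ∈ X, ∃ y ∈ X, x ≠ y ∧ r = gdist x y}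

/-- The unit tangent vector at `x` pointing toward `y`. -/
def tang (x y : E3) : E3 := ‖y - ⟪x, y⟫ • x‖⁻¹ • (y - ⟪x, y⟫ • x)

/-- The spherical angle `∠(y, x, z)` at the vertex `x` between `y` and `z`. -/
def ang (y x z : E3) : ℝ := Real.arccos ⟪tang x y, tang x z⟫
open InnerProductGeometry

/-!
By the spherical law of cosines the angle `A` at `x` satisfies
`cos² ψ + sin² ψ * cos A = cos d(y, z) ≤ cos ψ`. Cancelling `1 - cos ψ > 0` leaves
`(1 + cos ψ) * cos A ≤ cos ψ`. Here `1 + cos ψ > 0`, since for `ψ = π` the first inequality would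
read `1 ≤ -1`.
-/

section SphericalTriangle

variable {V : Type*} [NormedAddCommGroup V] [InnerProductSpace ℝ V] {x y z : V}

/-- The component of `y` tangent to the unit sphere at the unit vector `x`, not normalised: it gives
the initial direction of the geodesic from `x` to `y`, so that the angle at `x` of the spherical
triangle `x y z` is `angle (tangentPart x y) (tangentPart x z)`. -/
def tangentPart (x y : V) : V := y - ⟪x, y⟫ • x

theorem inner_tangentPart_tangentPart (hx : ‖x‖ = 1) (y z : V) :
    ⟪tangentPart x y, tangentPart x z⟫ = ⟪y, z⟫ - ⟪x, y⟫ * ⟪x, z⟫ := by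
  simp only [tangentPart, inner_sub_left, inner_sub_right, real_inner_smul_left,
    real_inner_smul_right, inner_self_eq_one_of_norm_eq_one hx, real_inner_comm x y]
  ring

theorem norm_tangentPart (hx : ‖x‖ = 1) (y : V) :
    ‖tangentPart x y‖ = ‖y‖ * Real.sin (angle x y) := by
  have hsin : 0 ≤ ‖y‖ * Real.sin (angle x y) :=
    mul_nonneg (norm_nonneg y) (sin_angle_nonneg x y)
  rw [← sq_eq_sq₀ (norm_nonneg _) hsin]
  calc ‖tangentPart x y‖ ^ 2
      = ‖y‖ ^ 2 - ⟪x, y⟫ * ⟪x, y⟫ := by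
        rw [← real_inner_self_eq_norm_sq, inner_tangentPart_tangentPart hx,
          real_inner_self_eq_norm_sq]
    _ = (‖y‖ * Real.sin (angle x y)) ^ 2 := by
        rw [← cos_angle_mul_norm_mul_norm x y, hx, mul_pow, Real.sin_sq]
        ring

theorem spherical_law_cos (hx : ‖x‖ = 1) (hy : ‖y‖ = 1) (hz : ‖z‖ = 1) :
    Real.cos (angle y z) = Real.cos (angle x y) * Real.cos (angle x z) +
      Real.sin (angle x y) * Real.sin (angle x z) *
        Real.cos (angle (tangentPart x y) (tangentPart x z)) := by
  have hinner := cos_angle_mul_norm_mul_norm (tangentPart x y) (tangentPart x z)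
  rw [inner_tangentPart_tangentPart hx, norm_tangentPart hx, norm_tangentPart hx, hy, hz,
    inner_eq_cos_angle_of_norm_eq_one hy hz, inner_eq_cos_angle_of_norm_eq_one hx hy,
    inner_eq_cos_angle_of_norm_eq_one hx hz] at hinner
  linarith

theorem angle_lower_bound_general {ψ : ℝ} (hψ : 0 < ψ)
    (hx : ‖x‖ = 1) (hy : ‖y‖ = 1) (hz : ‖z‖ = 1)
    (hxy : angle x y = ψ) (hxz : angle x z = ψ) (hyz : ψ ≤ angle y z) :
    Real.arccos (Real.cos ψ / (1 + Real.cos ψ)) ≤ angle (tangentPart x y) (tangentPart x z) := by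
  set A := angle (tangentPart x y) (tangentPart x z)
  have hlaw : Real.cos ψ ^ 2 + (1 - Real.cos ψ ^ 2) * Real.cos A ≤ Real.cos ψ := by
    calc Real.cos ψ ^ 2 + (1 - Real.cos ψ ^ 2) * Real.cos A
        = Real.cos (angle y z) := by
          rw [spherical_law_cos hx hy hz, hxy, hxz, ← Real.sin_sq]
          ring
      _ ≤ Real.cos ψ := Real.cos_le_cos_of_nonneg_of_le_pi hψ.le (angle_le_pi y z) hyz
  have hlt_one : Real.cos ψ < 1 := by
    simpa only [Real.cos_zero] using
      Real.cos_lt_cos_of_nonneg_of_le_pi le_rfl (hxy ▸ angle_le_pi x y) hψ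
  have hneg_one_lt : -1 < Real.cos ψ := by
    refine (Real.neg_one_le_cos ψ).lt_of_ne fun h ↦ ?_
    rw [← h] at hlaw
    norm_num at hlaw
  have hcancel : Real.cos A * (1 + Real.cos ψ) ≤ Real.cos ψ :=
    le_of_mul_le_mul_left (by linarith) (sub_pos.mpr hlt_one)
  calc Real.arccos (Real.cos ψ / (1 + Real.cos ψ))
      ≤ Real.arccos (Real.cos A) :=
        Real.arccos_le_arccos <| (le_div_iff₀ (by linarith)).mpr hcancel
    _ = A := Real.arccos_cos (angle_nonneg _ _) (angle_le_pi _ _)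

end SphericalTriangle

theorem gdist_eq_angle {x y : E3} (hx : ‖x‖ = 1) (hy : ‖y‖ = 1) : gdist x y = angle x y := by
  rw [gdist, angle, hx, hy, one_mul, div_one]

theorem ang_eq_angle_tangentPart (y x z : E3) :
    ang y x z = angle (tangentPart x y) (tangentPart x z) := by
  rw [ang, tang, tang, ← tangentPart, ← tangentPart, angle, real_inner_smul_left,
    real_inner_smul_right]
  congr 1
  ring

/-- Angle lower bound: if y and z are both at geodesic distance ψ from x and at
geodesic distance at least ψ from each other, then the angle at x is at least
the interior angle of the equilateral spherical triangle of side ψ. -/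
theorem angle_lower_bound {π : ℝ} (ψ : ℝ) (hψ0 : 0 < ψ) (hψ : ψ < π / 2)
    (x y z : E3) (hx : ‖x‖ = 1) (hy : ‖y‖ = 1) (hz : ‖z‖ = 1)
    (hxy : gdist x y = ψ) (hxz : gdist x z = ψ) (hyz : ψ ≤ gdist y z) :
    Real.arccos (Real.cos ψ / (1 + Real.cos ψ)) ≤ ang y x z := by
  rw [ang_eq_angle_tangentPart]
  exact angle_lower_bound_general hψ0 hx hy hz (gdist_eq_angle hx hy ▸ hxy)
    (gdist_eq_angle hx hz ▸ hxz) (gdist_eq_angle hy hz ▸ hyz)
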